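/- arXiv:1002.2866 — 2 statements merged into one kernel-verified Lean document; each statement's English description precedes it below -/
import Mathlib

section
/- Let F : ℝ² → ℝ² be a lift of a homeomorphism f of the two-torus homotopic to the identity. Suppose f preserves Lebesgue (Haar) measure on T² and ρ(F) has non-empty interior. If U ⊆ T² is a connected and bounded open neighbourhood of a point z ∈ C(f) and Û is a connected component of π⁻¹(U), then limsup_{n→∞} diam(F^n(Û))/n > 0. -/
noncomputable section
open Filter Topology Metric Set MeasureTheory

/-- Euclidean space `ℝ^d`. -/
abbrev E (d : ℕ) := EuclideanSpace ℝ (Fin d)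

/-- The integer lattice `ℤ^d` as an additive subgroup of `ℝ^d`. -/
def ZLat (d : ℕ) : AddSubgroup (E d) where
  carrier := {z | ∀ i, ∃ m : ℤ, z i = (m : ℝ)}
  zero_mem' := fun i => ⟨0, by simp⟩
  add_mem' := by
    intro x y hx hy i
    obtain ⟨m, hm⟩ := hx i
    obtain ⟨n, hn⟩ := hy i
    exact ⟨m + n, by simp [PiLp.add_apply, hm, hn]⟩
  neg_mem' := by
    intro x hx i
    obtain ⟨m, hm⟩ := hx i
    exact ⟨-m, by simp [PiLp.neg_apply, hm]⟩

/-- The torus `T^d = ℝ^d / ℤ^d`. -/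
abbrev T (d : ℕ) := E d ⧸ ZLat d

/-- The canonical projection `π : ℝ^d → T^d`. -/
def tpi (d : ℕ) : E d → T d := QuotientAddGroup.mk

/-- The set of rotation vectors of orbit segments starting in `W ⊆ ℝ^d`:
`{ρ | ∃ nᵢ → ∞, zᵢ ∈ W, (F^{nᵢ}(zᵢ) - zᵢ)/nᵢ → ρ}`. -/
def rotRel {d : ℕ} (F : E d → E d) (W : Set (E d)) : Set (E d) :=
  {ρ | ∃ (n : ℕ → ℕ) (z : ℕ → E d),
    Tendsto n atTop atTop ∧ (∀ i, z i ∈ W) ∧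
    Tendsto (fun i => (n i : ℝ)⁻¹ • (F^[n i] (z i) - z i)) atTop (𝓝 ρ)}

/-- The Misiurewicz–Ziemian rotation set `ρ(F)` of a lift `F`. -/
def rotSet {d : ℕ} (F : E d → E d) : Set (E d) := rotRel F Set.univ

/-- The rotation subset `ρ_U(F)` for `U ⊆ T^d` (starting points in `π⁻¹(U)`). -/
def rotU {d : ℕ} (F : E d → E d) (U : Set (T d)) : Set (E d) :=
  rotRel F (tpi d ⁻¹' U)

/-- `F` is a lift of the torus homeomorphism `f` (which is then homotopic to the
identity, as expressed by commutation with the deck translations). -/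
def IsLift {d : ℕ} (F : E d ≃ₜ E d) (f : T d ≃ₜ T d) : Prop :=
  (∀ z : E d, tpi d (F z) = f (tpi d z)) ∧ ∀ z : E d, ∀ m ∈ ZLat d, F (z + m) = F z + m

/-- `U ⊆ T^d` is bounded: the connected components of `π⁻¹(U)` are bounded. -/
def BoundedSet {d : ℕ} (U : Set (T d)) : Prop :=
  ∀ z ∈ tpi d ⁻¹' U, Bornology.IsBounded (connectedComponentIn (tpi d ⁻¹' U) z)

/-- `U ⊆ T^d` is recurrent: `f^n(U) ∩ U ≠ ∅` for infinitely many `n ≥ 1`. -/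
def Recurrent {d : ℕ} (f : T d ≃ₜ T d) (U : Set (T d)) : Prop :=
  {n : ℕ | 1 ≤ n ∧ ((⇑f)^[n] '' U ∩ U).Nonempty}.Infinite

/-- The Euclidean scalar product `⟨z, v⟩` in `ℝ²`. -/
def sdot (v z : E 2) : ℝ := z 0 * v 0 + z 1 * v 1

/-- `⟨z, v^⊥⟩` where `v^⊥ = (-v₂, v₁)`. -/
def pdot (v z : E 2) : ℝ := z 1 * v 0 - z 0 * v 1

/-- The affine line `L_{λ,v} = λv + {v}^⊥ = {z | ⟨z,v⟩ = λ⟨v,v⟩}`. -/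
def lineL (lam : ℝ) (v : E 2) : Set (E 2) := {z | sdot v z = lam * sdot v v}

/-- A vector of `ℝ²` is rational if both coordinates are rational. -/
def RatVec (z : E 2) : Prop := (∃ q : ℚ, z 0 = (q : ℝ)) ∧ ∃ q : ℚ, z 1 = (q : ℝ)

instance ZLat_closed (d : ℕ) : IsClosed ((ZLat d : AddSubgroup (E d)) : Set (E d)) := by
  have h : ((ZLat d : AddSubgroup (E d)) : Set (E d)) =
      ⋂ i, (fun z : E d => z i) ⁻¹' (Set.range ((↑) : ℤ → ℝ)) := by
    ext z
    simp only [Set.mem_iInter, Set.mem_preimage, Set.mem_range]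
    constructor
    · intro hz i; obtain ⟨m, hm⟩ := hz i; exact ⟨m, hm.symm⟩
    · intro hz i; obtain ⟨m, hm⟩ := hz i; exact ⟨m, hm.symm⟩
  rw [h]
  exact isClosed_iInter fun i =>
    Int.isClosedEmbedding_coe_real.isClosed_range.preimage (EuclideanSpace.proj i).continuous

instance (d : ℕ) : MeasurableSpace (T d) := borel _
instance (d : ℕ) : BorelSpace (T d) := ⟨rfl⟩

/-! Let `V` be the bounded component of `π⁻¹(U)` and `ψ` the displacement `F - id`, regarded as a
function on the torus, so that `(Fⁿ x - x) / n` is the Birkhoff average `Aₙψ` at `π x`. By the mean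
ergodic theorem the averages `⨍_U Aₙψ` converge to a vector `L`. Since `V` projects onto `U`, the
oscillation of `Aₙψ` on `U` is at most `(diam Fⁿ(V) + diam V) / n`; hence every rotation vector
realised from `U` lies within `limsup diam Fⁿ(V) / n` of the single vector `L`. -/

section MeanErgodic

variable {α H : Type*} [MeasurableSpace α] {μ : Measure α} [NormedAddCommGroup H]

theorem continuous_setIntegral_Lp [NormedSpace ℝ H] (p : ENNReal) [hp : Fact (1 ≤ p)] {s : Set α}
    (hs : μ s ≠ ⊤) : Continuous fun g : Lp H p μ => ∫ x in s, g x ∂μ := by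
  have : Fact (μ s < ⊤) := ⟨hs.lt_top⟩
  have memLp (g : Lp H p μ) : MemLp g p (μ.restrict s) := (Lp.memLp g).restrict s
  refine continuous_iff_continuousAt.2 fun g₀ => ?_
  refine tendsto_integral_of_L1' _ (memLp g₀).aestronglyMeasurable
    (.of_forall fun g => (memLp g).integrable hp.out) ?_
  have bound (g : Lp H p μ) : eLpNorm (g - g₀ : α → H) 1 (μ.restrict s) ≤
      eLpNorm (g - g₀ : α → H) p μ * μ s ^ (1 - 1 / p.toReal) := by
    grw [eLpNorm_le_eLpNorm_mul_rpow_measure_univ hp.out ((memLp g).sub (memLp g₀)).1,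
      eLpNorm_mono_measure _ Measure.restrict_le_self]
    simp
  have exponent_nonneg : 0 ≤ 1 - 1 / p.toReal := by
    simpa using ENNReal.toReal_mono ENNReal.one_ne_top (ENNReal.inv_le_one.2 hp.out)
  have lim := (Lp.tendsto_Lp_iff_tendsto_eLpNorm' id g₀).1 tendsto_id
  refine tendsto_of_tendsto_of_tendsto_of_le_of_le tendsto_const_nhds ?_ (fun _ => zero_le) bound
  simpa using ENNReal.Tendsto.mul_const lim
    (.inr (ENNReal.rpow_ne_top_of_nonneg exponent_nonneg hs))

theorem coeFn_birkhoffAverage_compMeasurePreserving [NormedSpace ℝ H] {p : ENNReal} {f : α → α}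
    (hf : MeasurePreserving f μ μ) (g : Lp H p μ) (n : ℕ) :
    ⇑(birkhoffAverage ℝ (Lp.compMeasurePreserving f hf) _root_.id n g) =ᵐ[μ]
      birkhoffAverage ℝ f g n := by
  have iterate : ∀ᵐ x ∂μ, ∀ k, (Lp.compMeasurePreserving f hf)^[k] g x = g (f^[k] x) := by
    refine ae_all_iff.2 fun k => ?_
    rw [Lp.compMeasurePreserving_iterate]
    exact Lp.coeFn_compMeasurePreserving g (hf.iterate k)
  filter_upwards [iterate,
    Lp.coeFn_smul (n : ℝ)⁻¹ (birkhoffSum (Lp.compMeasurePreserving f hf) _root_.id n g),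
    Lp.coeFn_fun_finsetSum (Finset.range n) fun k => (Lp.compMeasurePreserving f hf)^[k] g]
    with x hiterate hsmul hsum
  rw [birkhoffAverage, hsmul, Pi.smul_apply, birkhoffAverage]
  congr 1
  exact hsum.trans (Finset.sum_congr rfl fun k _ => hiterate k)

theorem exists_tendsto_setAverage_birkhoffAverage [InnerProductSpace ℝ H] [CompleteSpace H]
    {f : α → α} (hf : MeasurePreserving f μ μ) {ψ : α → H} (hψ : MemLp ψ 2 μ) {s : Set α}
    (hs : μ s ≠ ⊤) :
    ∃ L, Tendsto (fun n => ⨍ x in s, birkhoffAverage ℝ f ψ n x ∂μ) atTop (𝓝 L) := by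
  let K : Lp H 2 μ →L[ℝ] Lp H 2 μ := (Lp.compMeasurePreservingₗᵢ ℝ f hf).toContinuousLinearMap
  have mean_ergodic := K.tendsto_birkhoffAverage_orthogonalProjection
    (LinearIsometry.norm_toContinuousLinearMap_le _) (hψ.toLp ψ)
  have integral_lim := ((continuous_setIntegral_Lp 2 hs).tendsto _).comp mean_ergodic
  refine ⟨_, (integral_lim.const_smul (μ.real s)⁻¹).congr fun n => ?_⟩
  rw [setAverage_eq]
  congr 1
  refine integral_congr_ae (ae_restrict_of_ae ?_)
  exact (coeFn_birkhoffAverage_compMeasurePreserving hf _ n).trans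
    (hf.quasiMeasurePreserving.birkhoffAverage_ae_eq_of_ae_eq ℝ hψ.coeFn_toLp n)

theorem dist_setAverage_le [NormedSpace ℝ H] [CompleteSpace H] {s : Set α} (hs : MeasurableSet s)
    (hs₀ : μ s ≠ 0) (hs_top : μ s ≠ ⊤) {g : α → H} (hg : IntegrableOn g s μ) {c : H} {r : ℝ}
    (hr : ∀ x ∈ s, dist (g x) c ≤ r) : dist (⨍ x in s, g x ∂μ) c ≤ r :=
  (convex_closedBall c r).set_average_mem isClosed_closedBall hs₀ hs_top
    (ae_restrict_of_forall_mem hs hr) hg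

end MeanErgodic

section QuotientComponents

variable {G : Type*} [AddGroup G] [TopologicalSpace G] [IsTopologicalAddGroup G]
  {N : AddSubgroup G} {U : Set (G ⧸ N)}

theorem mk_image_connectedComponentIn_eq_of_mk_eq {a b : G} (hab : (a : G ⧸ N) = b)
    (ha : (a : G ⧸ N) ∈ U) :
    ((↑) : G → G ⧸ N) '' connectedComponentIn ((↑) ⁻¹' U) a =
      (↑) '' connectedComponentIn ((↑) ⁻¹' U) b := by
  obtain ⟨m, hm, rfl⟩ : ∃ m ∈ N, b = a + m := ⟨-a + b, QuotientAddGroup.eq.1 hab, by simp⟩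
  have mk_add (x : G) : ((x + m : G) : G ⧸ N) = x := QuotientAddGroup.mk_add_of_mem x hm
  have preimage_invariant :
      Homeomorph.addRight m '' (((↑) : G → G ⧸ N) ⁻¹' U) = (↑) ⁻¹' U := by
    ext x
    simp [QuotientAddGroup.mk_add_of_mem x (N.neg_mem hm)]
  have component_add := (Homeomorph.addRight m).image_connectedComponentIn
    (s := ((↑) : G → G ⧸ N) ⁻¹' U) ha
  rw [preimage_invariant, Homeomorph.coe_addRight] at component_add
  rw [← component_add, image_image]
  simp only [mk_add]

theorem mk_image_connectedComponentIn_eq_of_mem {p q : G} {y : G ⧸ N}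
    (hp : y ∈ ((↑) : G → G ⧸ N) '' connectedComponentIn ((↑) ⁻¹' U) p)
    (hq : y ∈ ((↑) : G → G ⧸ N) '' connectedComponentIn ((↑) ⁻¹' U) q) :
    ((↑) : G → G ⧸ N) '' connectedComponentIn ((↑) ⁻¹' U) p =
      (↑) '' connectedComponentIn ((↑) ⁻¹' U) q := by
  obtain ⟨a, ha, rfl⟩ := hp
  obtain ⟨b, hb, hba⟩ := hq
  rw [connectedComponentIn_eq ha, connectedComponentIn_eq hb]
  exact mk_image_connectedComponentIn_eq_of_mk_eq hba.symm
    (connectedComponentIn_subset (QuotientAddGroup.mk ⁻¹' U) _ ha)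

theorem subset_mk_image_connectedComponentIn [LocallyConnectedSpace G] (hU : IsOpen U)
    (hUconn : IsPreconnected U) {w : G} (hw : (w : G ⧸ N) ∈ U) :
    U ⊆ ((↑) : G → G ⧸ N) '' connectedComponentIn ((↑) ⁻¹' U) w := by
  let image (p : G) : Set (G ⧸ N) := (↑) '' connectedComponentIn ((↑) ⁻¹' U) p
  have image_open (p : G) : IsOpen (image p) := QuotientAddGroup.isOpenMap_coe _
    (hU.preimage QuotientAddGroup.continuous_mk).connectedComponentIn
  have mem_image {p : G} (hp : (p : G ⧸ N) ∈ U) : (p : G ⧸ N) ∈ image p :=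
    ⟨p, mem_connectedComponentIn hp, rfl⟩
  intro y hy
  obtain ⟨p, hwp, hyp⟩ : ∃ p, (w : G ⧸ N) ∈ image p ∧ y ∈ image p := by
    refine hUconn.induction₂ (fun a b => ∃ p, a ∈ image p ∧ b ∈ image p) ?_ ?_ ?_ hw hy
    · intro x hx
      obtain ⟨p, rfl⟩ := QuotientAddGroup.mk_surjective x
      filter_upwards [mem_nhdsWithin_of_mem_nhds ((image_open p).mem_nhds (mem_image hx))] with b hb
      exact ⟨p, mem_image hx, hb⟩
    · rintro a b c - - - ⟨p, hap, hbp⟩ ⟨q, hbq, hcq⟩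
      exact ⟨p, hap, (mk_image_connectedComponentIn_eq_of_mem hbp hbq).symm.subset hcq⟩
    · rintro a b - - ⟨p, hap, hbp⟩
      exact ⟨p, hbp, hap⟩
  exact (mk_image_connectedComponentIn_eq_of_mem hwp (mem_image hw)).subset hyp

end QuotientComponents

theorem le_limsup_of_tendsto_of_le_comp {ι α R : Type*} [ConditionallyCompleteLinearOrder R]
    [DenselyOrdered R] [TopologicalSpace R] [OrderTopology R] {l : Filter ι} [l.NeBot]
    {l' : Filter α} {u : α → R} {n : ι → α} {v : ι → R} {a : R} (hn : Tendsto n l l')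
    (hv : Tendsto v l (𝓝 a)) (hle : ∀ᶠ i in l, v i ≤ u (n i)) (hu : l'.IsBoundedUnder (· ≤ ·) u) :
    a ≤ limsup u l' := by
  refine le_of_forall_lt_imp_le_of_dense fun b hb => le_limsup_of_frequently_le ?_ hu
  refine hn.frequently (Eventually.frequently ?_)
  filter_upwards [hv.eventually_const_lt hb, hle] with i hbv hvu
  exact hbv.le.trans hvu

section Displacement

variable {X : Type*} {g : X → X} {s : Set X}

theorem dist_iterate_le_of_dist_le [PseudoMetricSpace X] {C : ℝ} (hg : ∀ x, dist (g x) x ≤ C)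
    (n : ℕ) (x : X) : dist (g^[n] x) x ≤ n * C := by
  induction n with
  | zero => simp
  | succ n ih =>
    rw [Function.iterate_succ_apply']
    push_cast
    linarith [dist_triangle (g (g^[n] x)) (g^[n] x) x, hg (g^[n] x)]

theorem image_iterate_subset_cthickening [PseudoMetricSpace X] {C : ℝ}
    (hg : ∀ x, dist (g x) x ≤ C) (n : ℕ) : g^[n] '' s ⊆ cthickening (n * C) s := by
  rintro _ ⟨x, hx, rfl⟩
  exact mem_cthickening_of_dist_le _ x _ s hx (dist_iterate_le_of_dist_le hg n x)

theorem diam_image_iterate_div_le [PseudoMetricSpace X] {C : ℝ} (hC : 0 ≤ C)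
    (hg : ∀ x, dist (g x) x ≤ C) (hs : Bornology.IsBounded s) (n : ℕ) :
    diam (g^[n] '' s) / n ≤ diam s + 2 * C := by
  rcases n.eq_zero_or_pos with rfl | hn
  · simpa using by positivity
  have one_le : (1 : ℝ) ≤ n := by exact_mod_cast hn
  rw [div_le_iff₀ (by positivity)]
  calc diam (g^[n] '' s) ≤ diam (cthickening (n * C) s) :=
        diam_mono (image_iterate_subset_cthickening hg n) hs.cthickening
    _ ≤ diam s + 2 * (n * C) := diam_cthickening_le s (by positivity)
    _ ≤ (diam s + 2 * C) * n := by nlinarith [diam_nonneg (s := s)]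

theorem dist_smul_sub_smul_sub_le [SeminormedAddCommGroup X] [NormedSpace ℝ X]
    (hs : Bornology.IsBounded s) (hgs : Bornology.IsBounded (g '' s)) (n : ℕ) {x y : X}
    (hx : x ∈ s) (hy : y ∈ s) :
    dist ((n : ℝ)⁻¹ • (g x - x)) ((n : ℝ)⁻¹ • (g y - y)) ≤ diam (g '' s) / n + diam s / n := by
  rw [dist_smul₀, norm_inv, RCLike.norm_natCast, ← add_div, div_eq_inv_mul]
  gcongr
  exact (dist_sub_sub_le _ _ _ _).trans (add_le_add
    (dist_le_diam_of_mem hgs (mem_image_of_mem g hx) (mem_image_of_mem g hy))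
    (dist_le_diam_of_mem hs hx hy))

end Displacement

instance compactSpace_T (d : ℕ) : CompactSpace (T d) := by
  have cube_surjective :
      (fun x : Fin d → ℝ => tpi d (WithLp.toLp 2 x)) '' Icc 0 1 = univ := by
    refine eq_univ_of_forall fun y => ?_
    obtain ⟨x, rfl⟩ := QuotientAddGroup.mk_surjective y
    refine ⟨fun i => Int.fract (x i),
      ⟨fun i => Int.fract_nonneg _, fun i => (Int.fract_lt_one _).le⟩,
      QuotientAddGroup.eq.2 fun i => ⟨⌊x i⌋, ?_⟩⟩
    simp [← Int.self_sub_floor]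
  refine ⟨cube_surjective ▸ isCompact_Icc.image ?_⟩
  exact QuotientAddGroup.continuous_mk.comp (PiLp.continuous_toLp 2 _)

namespace IsLift

variable {d : ℕ} {F : E d ≃ₜ E d} {f : T d ≃ₜ T d}

/-- The displacement `F - id` of a lift, which is `ℤ^d`-periodic, as a function on the torus. Its
Birkhoff averages under `f` are the finite-time rotation vectors of `F`. -/
def displacement (h : IsLift F f) : T d → E d :=
  Quotient.lift (fun x => F x - x) fun a b hab => by
    obtain ⟨m, hm, rfl⟩ : ∃ m ∈ ZLat d, b = a + m :=
      ⟨-a + b, QuotientAddGroup.leftRel_apply.1 hab, by simp⟩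
    simp [h.2 a m hm]

theorem displacement_tpi (h : IsLift F f) (x : E d) : h.displacement (tpi d x) = F x - x := rfl

theorem continuous_displacement (h : IsLift F f) : Continuous h.displacement :=
  (F.continuous.sub continuous_id).quotient_lift _

theorem exists_dist_apply_le (h : IsLift F f) : ∃ C, 0 ≤ C ∧ ∀ x, dist (F x) x ≤ C := by
  obtain ⟨C, hC⟩ :=
    isCompact_univ.exists_bound_of_continuousOn h.continuous_displacement.continuousOn
  refine ⟨C, (norm_nonneg _).trans (hC (tpi d 0) (mem_univ _)), fun x => ?_⟩
  rw [dist_eq_norm, ← h.displacement_tpi]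
  exact hC _ (mem_univ _)

theorem tpi_iterate (h : IsLift F f) (n : ℕ) (x : E d) : f^[n] (tpi d x) = tpi d (F^[n] x) :=
  (Function.Semiconj.iterate_right (f := tpi d) h.1 n x).symm

theorem birkhoffAverage_displacement (h : IsLift F f) (n : ℕ) (x : E d) :
    birkhoffAverage ℝ f h.displacement n (tpi d x) = (n : ℝ)⁻¹ • (F^[n] x - x) := by
  simp only [birkhoffAverage, birkhoffSum, h.tpi_iterate, h.displacement_tpi,
    ← Function.iterate_succ_apply']
  rw [Finset.sum_range_sub (fun k => F^[k] x), Function.iterate_zero_apply]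

theorem continuous_birkhoffAverage_displacement (h : IsLift F f) (n : ℕ) :
    Continuous (birkhoffAverage ℝ f h.displacement n) :=
  (continuous_finsetSum _ fun k _ =>
    h.continuous_displacement.comp (f.continuous.iterate k)).const_smul (n : ℝ)⁻¹

theorem isBoundedUnder_diam_image_iterate_div (h : IsLift F f) {V : Set (E d)}
    (hV : Bornology.IsBounded V) :
    atTop.IsBoundedUnder (· ≤ ·) fun n : ℕ => diam (F^[n] '' V) / n := by
  obtain ⟨C, hC, hdist⟩ := h.exists_dist_apply_le
  exact isBoundedUnder_of ⟨diam V + 2 * C, diam_image_iterate_div_le hC hdist hV⟩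

theorem dist_birkhoffAverage_displacement_le (h : IsLift F f) {V : Set (E d)}
    (hV : Bornology.IsBounded V) (n : ℕ) {y₁ y₂ : T d} (hy₁ : y₁ ∈ tpi d '' V)
    (hy₂ : y₂ ∈ tpi d '' V) :
    dist (birkhoffAverage ℝ f h.displacement n y₁) (birkhoffAverage ℝ f h.displacement n y₂) ≤
      diam (F^[n] '' V) / n + diam V / n := by
  obtain ⟨C, -, hC⟩ := h.exists_dist_apply_le
  obtain ⟨x₁, hx₁, rfl⟩ := hy₁
  obtain ⟨x₂, hx₂, rfl⟩ := hy₂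
  rw [h.birkhoffAverage_displacement, h.birkhoffAverage_displacement]
  exact dist_smul_sub_smul_sub_le hV (hV.cthickening.subset (image_iterate_subset_cthickening hC n))
    n hx₁ hx₂

theorem exists_forall_dist_le_limsup_diam (h : IsLift F f) {μ : Measure (T d)} [IsFiniteMeasure μ]
    (hf : MeasurePreserving f μ μ) {U : Set (T d)} (hU : MeasurableSet U) (hμU : μ U ≠ 0)
    {V : Set (E d)} (hV : Bornology.IsBounded V) (hUV : U ⊆ tpi d '' V) :
    ∃ L, ∀ ρ ∈ rotU F U, dist L ρ ≤ limsup (fun n : ℕ => diam (F^[n] '' V) / n) atTop := by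
  have memLp : MemLp h.displacement 2 μ :=
    h.continuous_displacement.memLp_of_hasCompactSupport (.of_compactSpace _)
  have integrable (n : ℕ) : Integrable (birkhoffAverage ℝ f h.displacement n) μ :=
    (h.continuous_birkhoffAverage_displacement n).integrable_of_hasCompactSupport
      (.of_compactSpace _)
  obtain ⟨L, hL⟩ := exists_tendsto_setAverage_birkhoffAverage hf memLp (measure_ne_top μ U)
  refine ⟨L, ?_⟩
  rintro ρ ⟨n, z, hn, hzU, hρ⟩
  simp only [← h.birkhoffAverage_displacement] at hρ
  have dist_lim : Tendsto (fun i => dist (⨍ x in U, birkhoffAverage ℝ f h.displacement (n i) x ∂μ)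
      (birkhoffAverage ℝ f h.displacement (n i) (tpi d (z i))) - diam V / n i)
      atTop (𝓝 (dist L ρ)) := by
    simpa using ((hL.comp hn).dist hρ).sub
      ((tendsto_const_div_atTop_nhds_zero_nat (diam V)).comp hn)
  refine le_limsup_of_tendsto_of_le_comp hn dist_lim (.of_forall fun i => ?_)
    (h.isBoundedUnder_diam_image_iterate_div hV)
  rw [sub_le_iff_le_add]
  exact dist_setAverage_le hU hμU (measure_ne_top μ U) (integrable _).integrableOn fun x hx =>
    h.dist_birkhoffAverage_displacement_le hV _ (hUV hx) (hUV (hzU i))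

end IsLift

theorem nontrivial_of_nonempty_interior_convexHull {X : Type*} [AddCommGroup X] [Module ℝ X]
    [TopologicalSpace X] [∀ x : X, (𝓝[≠] x).NeBot] {s : Set X}
    (hs : (interior (convexHull ℝ s)).Nonempty) : s.Nontrivial := by
  by_contra hsub
  rcases (not_nontrivial_iff.1 hsub).eq_empty_or_singleton with rfl | ⟨x, rfl⟩ <;> simp at hs

theorem chaotic_region_linear_spreading_general {d : ℕ} {F : E d ≃ₜ E d} {f : T d ≃ₜ T d}
    (hlift : IsLift F f) {μ : Measure (T d)} [IsFiniteMeasure μ] (hpres : MeasurePreserving f μ μ)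
    {U : Set (T d)} (hUopen : IsOpen U) (hUconn : IsPreconnected U) (hμU : μ U ≠ 0) {w : E d}
    (hw : w ∈ tpi d ⁻¹' U) (hbdd : Bornology.IsBounded (connectedComponentIn (tpi d ⁻¹' U) w))
    {ρ₁ ρ₂ : E d} (h₁ : ρ₁ ∈ rotU F U) (h₂ : ρ₂ ∈ rotU F U) :
    dist ρ₁ ρ₂ ≤ 2 * limsup (fun n : ℕ =>
      diam (F^[n] '' connectedComponentIn (tpi d ⁻¹' U) w) / n) atTop := by
  obtain ⟨L, hL⟩ := hlift.exists_forall_dist_le_limsup_diam hpres hUopen.measurableSet hμU hbdd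
    (subset_mk_image_connectedComponentIn hUopen hUconn hw)
  linarith [dist_triangle_left ρ₁ ρ₂ L, hL ρ₁ h₁, hL ρ₂ h₂]

/-- **Proposition (linear spreading in the chaotic region, part (b)).**
If `f` preserves Lebesgue (Haar) measure on `T²` and `ρ(F)` has non-empty interior,
then for any connected, bounded open neighbourhood `U` of a point `z` of the chaotic
region `C(f)` and any connected component `Û` of `π⁻¹(U)` one has
`limsup_{n→∞} diam(F^n(Û))/n > 0`. -/
theorem chaotic_region_linear_spreading
    (F : E 2 ≃ₜ E 2) (f : T 2 ≃ₜ T 2) (hlift : IsLift F f)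
    (μ : Measure (T 2)) (hHaar : μ.IsAddHaarMeasure)
    (hpres : MeasurePreserving (⇑f) μ μ)
    (hint : (interior (rotSet (⇑F))).Nonempty)
    (z : T 2)
    (hz : ∀ W : Set (T 2), IsOpen W → z ∈ W →
      (interior (convexHull ℝ (rotU (⇑F) W))).Nonempty)
    (U : Set (T 2)) (hUopen : IsOpen U) (hUconn : IsConnected U)
    (hUbdd : BoundedSet U) (hzU : z ∈ U)
    (Uhat : Set (E 2))
    (hUhat : ∃ w ∈ tpi 2 ⁻¹' U, Uhat = connectedComponentIn (tpi 2 ⁻¹' U) w) :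
    0 < Filter.limsup (fun n : ℕ => Metric.diam ((⇑F)^[n] '' Uhat) / n) atTop := by
  obtain ⟨w, hw, rfl⟩ := hUhat
  obtain ⟨ρ₁, h₁, ρ₂, h₂, hne⟩ := nontrivial_of_nonempty_interior_convexHull (hz U hUopen hzU)
  linarith [dist_pos.2 hne, chaotic_region_linear_spreading_general hlift hpres hUopen
    hUconn.isPreconnected (hUopen.measure_ne_zero μ ⟨z, hzU⟩) hw (hUbdd w hw) h₁ h₂]
end
end

section
/- Let G : ℝ² → ℝ² be a lift of a homeomorphism g of the two-torus homotopic to the identity, let Û ⊆ ℝ² be bounded and connected with G(Û) ∩ Û ≠ ∅, let λ ≠ 0, v ∈ ℝ² \ {0} and a ≤ b. If ρ_Û(G) = L_{λ,v}[a,b], then every extremal point of the rotation set ρ(G) belongs to the cone C_v[a,b]. -/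
noncomputable section
open Filter Topology Metric Set MeasureTheory

/-- The segment `L_{λ,v}[a,b] = {z ∈ L_{λ,v} | a⟨z,v⟩ ≤ ⟨z,v^⊥⟩ ≤ b⟨z,v⟩}`. -/
def lineSeg (lam : ℝ) (v : E 2) (a b : ℝ) : Set (E 2) :=
  {z ∈ lineL lam v | a * sdot v z ≤ pdot v z ∧ pdot v z ≤ b * sdot v z}

/-- The cone `C_v[a,b] = {z | a⟨z,v⟩ ≤ ⟨z,v^⊥⟩ ≤ b⟨z,v⟩}`. -/
def coneC (v : E 2) (a b : ℝ) : Set (E 2) :=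
  {z | a * sdot v z ≤ pdot v z ∧ pdot v z ≤ b * sdot v z}

/-!
Write `L_{λ,v}[a,b]` in linear coordinates `X`, `Y` for which it lies on `X = L > 0` and `Y ≤ 0` is
one side of the cone, and suppose that some `σ ∈ ρ(G)` has `Y σ > 0`. For every `t`, some orbit
segment of length `t` gains almost `t · Y σ` in height, and its integer translates can be placed at
will: let one start well below the orbit segment `U, G U, …, G^M U` and still end above the image of
that segment under `G^t`, which is possible since `G^n U` has height at most `o(n)`. The image under
`G^t` of the vertical half-line hanging from the starting point then comes up from below between the
two ends of the image of the orbit segment. Both sets are connected, so a planar crossing argument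
makes the images meet; by injectivity the half-line meets the orbit segment, and some `G^j U` has a
point linearly far below height `0`.

This is absurd. If `X = L` on all of `ρ(G)`, then vertical lines stay nearly vertical under `G^t`,
so `t` can be taken so long compared with `M` that the drop exceeds what the bounded displacement of
`G` allows in time `M`. Otherwise the half-line argument with `X` and `Y` exchanged shows that the
height spread of `G^n U` is `o(n)`, so all of `G^n U` is near height `0` at the times `n` where
`max Y = 0` is approached, and placing the half-line at abscissa about `L n` forces `j` close to
such an `n`.
-/

section PlanarCrossing

open scoped unitInterval

lemma isLocallyInjective_cexp : IsLocallyInjective Complex.exp := by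
  have h := Complex.isCoveringMapOn_exp.isLocalHomeomorphOn
  rw [show Complex.exp ⁻¹' {0}ᶜ = univ from eq_univ_of_forall Complex.exp_ne_zero,
    ← isLocalHomeomorph_iff_isLocalHomeomorphOn_univ] at h
  exact h.isLocallyInjective

lemma exists_continuousMap_cexp_eq (f : C(I × I, ℂ)) (hf : ∀ x, f x ≠ 0) :
    ∃ F : C(I × I, ℂ), ∀ x, Complex.exp (F x) = f x := by
  let r : C(ℝ × ℝ, I × I) :=
    ⟨Prod.map (projIcc 0 1 zero_le_one) (projIcc 0 1 zero_le_one),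
      continuous_projIcc.prodMap continuous_projIcc⟩
  let ι : C(I × I, ℝ × ℝ) :=
    ⟨Prod.map (↑) (↑), continuous_subtype_val.prodMap continuous_subtype_val⟩
  obtain ⟨F, ⟨-, hF⟩, -⟩ := Complex.isCoveringMapOn_exp.existsUnique_continuousMap_lifts
    (f.comp r) (a₀ := 0) (Complex.exp_log (hf (r 0))) fun x => hf (r x)
  have hr : ∀ x, r (ι x) = x := fun x =>
    Prod.ext (projIcc_val zero_le_one x.1) (projIcc_val zero_le_one x.2)
  exact ⟨F.comp ι, fun x => (congrFun hF (ι x)).trans (congrArg f (hr x))⟩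

lemma sub_eq_log_sub_log_of_exp_eq {X : Type*} [TopologicalSpace X] {S : Set X}
    (hS : IsPreconnected S) {f F : X → ℂ} (hf : ContinuousOn f S) (hF : ContinuousOn F S)
    (hexp : ∀ x ∈ S, Complex.exp (F x) = f x) (hslit : ∀ x ∈ S, f x ∈ Complex.slitPlane)
    {x y : X} (hx : x ∈ S) (hy : y ∈ S) :
    F y - F x = Complex.log (f y) - Complex.log (f x) := by
  have hone : ∀ z ∈ S, Complex.exp (F z - Complex.log (f z)) = 1 := fun z hz => by
    have hz0 := Complex.slitPlane_ne_zero (hslit z hz)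
    rw [Complex.exp_sub, hexp z hz, Complex.exp_log hz0, div_self hz0]
  have hconst : F y - Complex.log (f y) = F x - Complex.log (f x) :=
    (T2Space.isSeparatedMap Complex.exp).constOn_of_comp isLocallyInjective_cexp hS
      (hF.sub (hf.clog hslit)) (fun a ha b hb => (hone a ha).trans (hone b hb).symm) hy hx
  linear_combination hconst

-- Along the bottom, right and top sides `f` stays in the slit plane, and along the left side `-f`
-- does, so a continuous logarithm of `f` would have two different increments between the left
-- corners.
theorem exists_eq_zero_of_sign_change (f : C(I × I, ℂ))
    (left : ∀ t, (f (0, t)).re < 0) (right : ∀ t, 0 < (f (1, t)).re)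
    (bottom : ∀ s, (f (s, 0)).im < 0) (top : ∀ s, 0 < (f (s, 1)).im) : ∃ x, f x = 0 := by
  by_contra! hne
  obtain ⟨F, hF⟩ := exists_continuousMap_cexp_eq f hne
  have side {γ : C(I, I × I)} (hγ : ∀ t, f (γ t) ∈ Complex.slitPlane) :
      F (γ 1) - F (γ 0) = Complex.log (f (γ 1)) - Complex.log (f (γ 0)) :=
    sub_eq_log_sub_log_of_exp_eq (f := f ∘ γ) (F := F ∘ γ) isPreconnected_univ
      (by fun_prop) (by fun_prop) (fun t _ => hF (γ t)) (fun t _ => hγ t) trivial trivial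
  have hbottom : F (1, 0) - F (0, 0) = Complex.log (f (1, 0)) - Complex.log (f (0, 0)) :=
    side (γ := ⟨fun s => (s, 0), by fun_prop⟩) fun s => .inr (bottom s).ne
  have hright : F (1, 1) - F (1, 0) = Complex.log (f (1, 1)) - Complex.log (f (1, 0)) :=
    side (γ := ⟨fun t => (1, t), by fun_prop⟩) fun t => .inl (right t)
  have htop : F (1, 1) - F (0, 1) = Complex.log (f (1, 1)) - Complex.log (f (0, 1)) :=
    side (γ := ⟨fun s => (s, 1), by fun_prop⟩) fun s => .inr (top s).ne'
  have hleft : F (0, 1) - F (0, 0) = Complex.log (-f (0, 1)) - Complex.log (-f (0, 0)) := by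
    have h := sub_eq_log_sub_log_of_exp_eq (f := fun t : I => -f (0, t))
      (F := fun t => F (0, t) + Real.pi * Complex.I) isPreconnected_univ (by fun_prop)
      (by fun_prop) (fun t _ => by rw [Complex.exp_add_pi_mul_I, hF])
      (fun t _ => .inl (by simpa using left t)) (mem_univ 0) (mem_univ 1)
    linear_combination h
  have hlog : Complex.log (f (0, 1)) - Complex.log (f (0, 0)) =
      Complex.log (-f (0, 1)) - Complex.log (-f (0, 0)) := by
    linear_combination hleft + htop - hbottom - hright
  have harg := congrArg Complex.im hlog
  simp only [Complex.sub_im, Complex.log_im, Complex.arg_neg_eq_arg_sub_pi_of_im_pos (top 0),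
    Complex.arg_neg_eq_arg_add_pi_of_im_neg (bottom 0)] at harg
  linarith [Real.pi_pos]

lemma exists_eq_of_paths_cross {γ α : C(I, ℂ)}
    (hre : ∀ t, (γ 0).re < (α t).re ∧ (α t).re < (γ 1).re)
    (him : ∀ s, (α 0).im < (γ s).im ∧ (γ s).im < (α 1).im) : ∃ s t, γ s = α t := by
  obtain ⟨⟨s, t⟩, hst⟩ := exists_eq_zero_of_sign_change
    ⟨fun x : I × I => γ x.1 - α (σ x.2), by fun_prop⟩
    (fun t => by simpa using (hre (σ t)).1) (fun t => by simpa using (hre (σ t)).2)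
    (fun s => by simpa using (him s).2) (fun s => by simpa using (him s).1)
  exact ⟨s, σ t, sub_eq_zero.1 hst⟩

theorem exists_mem_of_path_crosses {γ : C(I, ℂ)} {A : Set ℂ} (hA : IsPreconnected A)
    (hre : ∀ z ∈ A, (γ 0).re < z.re ∧ z.re < (γ 1).re) {a b : ℂ} (ha : a ∈ A) (hb : b ∈ A)
    (him : ∀ s, a.im < (γ s).im ∧ (γ s).im < b.im) : ∃ s, γ s ∈ A := by
  by_contra! hdisj
  let O : Set ℂ := Complex.re ⁻¹' Ioo (γ 0).re (γ 1).re ∩ (range γ)ᶜ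
  have hO : IsOpen O := (isOpen_Ioo.preimage Complex.continuous_re).inter
    (isCompact_range γ.continuous).isClosed.isOpen_compl
  have hAO : A ⊆ O := fun z hz => ⟨hre z hz, by rintro ⟨s, rfl⟩; exact hdisj s hz⟩
  have hpath : IsPathConnected (connectedComponentIn O a) :=
    hO.connectedComponentIn.isConnected_iff_isPathConnected.1
      (isConnected_connectedComponentIn_iff.2 (hAO ha))
  have hsub := hA.subset_connectedComponentIn ha hAO
  obtain ⟨α, hα⟩ := hpath.joinedIn a (hsub ha) b (hsub hb)
  have hαO : ∀ t, α t ∈ O := fun t => connectedComponentIn_subset _ _ (hα t)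
  obtain ⟨s, t, hst⟩ := exists_eq_of_paths_cross (γ := γ) (α := α)
    (fun t => (hαO t).1) (by simpa using him)
  exact (hαO t).2 ⟨s, hst⟩

end PlanarCrossing

section LinearCoordinates

variable {V : Type*} [NormedAddCommGroup V] [NormedSpace ℝ V] {X Y : V →L[ℝ] ℝ}

lemma exists_coordinates_eq (hXY : Function.Bijective (X.prod Y)) (x y : ℝ) :
    ∃ z, X z = x ∧ Y z = y := by
  obtain ⟨z, hz⟩ := hXY.surjective (x, y)
  exact ⟨z, Prod.ext_iff.1 hz⟩

lemma bijective_coordinates_swap (hXY : Function.Bijective (X.prod Y)) :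
    Function.Bijective (Y.prod X) :=
  Prod.swap_bijective.comp hXY

lemma bijective_coordinates_neg_left (hXY : Function.Bijective (X.prod Y)) :
    Function.Bijective ((-X).prod Y) :=
  (Equiv.prodCongr (Equiv.neg ℝ) (Equiv.refl ℝ)).bijective.comp hXY

lemma bijective_coordinates_shear (hXY : Function.Bijective (X.prod Y)) (b : ℝ) {c : ℝ}
    (hc : c ≠ 0) : Function.Bijective (X.prod (b • X + c • Y)) := by
  have hshear : Function.Bijective fun p : ℝ × ℝ => (p.1, b * p.1 + c * p.2) :=
    Function.bijective_iff_has_inverse.2 ⟨fun p => (p.1, c⁻¹ * (p.2 - b * p.1)),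
      fun p => by simp [hc], fun p => by simp [hc]⟩
  exact hshear.comp hXY

open scoped unitInterval in
lemma exists_mem_segment_of_image_crosses (hXY : Function.Bijective (X.prod Y)) {f : V → V}
    (hf : Continuous f) (hinj : Function.Injective f) {A : Set V} (hA : IsPreconnected A)
    {p q : V} (hX : ∀ z ∈ A, X (f p) < X (f z) ∧ X (f z) < X (f q)) {a b : V} (ha : a ∈ A)
    (hb : b ∈ A) (hY : ∀ z ∈ segment ℝ p q, Y (f a) < Y (f z) ∧ Y (f z) < Y (f b)) :
    ∃ z ∈ A, z ∈ segment ℝ p q := by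
  let Φ : C(V, ℂ) := ⟨fun z => Complex.equivRealProdCLM.symm ((X.prod Y) (f z)), by fun_prop⟩
  have hΦ : Function.Injective Φ :=
    (Complex.equivRealProdCLM.symm.injective.comp hXY.injective).comp hinj
  let γ : C(I, ℂ) := ⟨fun s => Φ (AffineMap.lineMap p q (s : ℝ)), by fun_prop⟩
  have hγ : ∀ s : I, AffineMap.lineMap p q (s : ℝ) ∈ segment ℝ p q := fun s =>
    segment_eq_image_lineMap ℝ p q ▸ mem_image_of_mem _ s.2
  obtain ⟨s, z, hz, hzs⟩ := exists_mem_of_path_crosses (γ := γ)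
    (hA.image Φ Φ.continuous.continuousOn)
    (by rintro _ ⟨z, hz, rfl⟩; simpa [γ, Φ] using hX z hz) (mem_image_of_mem Φ ha)
    (mem_image_of_mem Φ hb) (fun s => by simpa [γ, Φ] using hY _ (hγ s))
  exact ⟨z, hz, hΦ hzs ▸ hγ s⟩

lemma exists_mem_halfLine_of_image_crosses (hXY : Function.Bijective (X.prod Y)) {f : V → V}
    (hf : Continuous f) (hinj : Function.Injective f) {K : ℝ} (hK : ∀ z, X (f z) ≤ X z + K)
    {A : Set V} (hA : IsPreconnected A) (hbdd : BddBelow ((fun z => X (f z)) '' A)) {w : V}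
    (hX : ∀ z ∈ A, X (f z) < X (f w)) {a b : V} (ha : a ∈ A) (hb : b ∈ A)
    (hY : ∀ z, Y z = Y w → Y (f a) < Y (f z) ∧ Y (f z) < Y (f b)) :
    ∃ z ∈ A, Y z = Y w ∧ X z ≤ X w := by
  obtain ⟨c, hc⟩ := hbdd
  obtain ⟨e, heX, heY⟩ := exists_coordinates_eq hXY (min (X w) (c - K - 1)) (Y w)
  have hseg : segment ℝ e w ⊆ {z | Y z = Y w} :=
    (convex_hyperplane Y.isLinear (Y w)).segment_subset heY rfl
  have hle : segment ℝ e w ⊆ {z | X z ≤ X w} :=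
    (convex_halfSpace_le X.isLinear (X w)).segment_subset (heX.trans_le (min_le_left _ _))
      (le_refl (X w))
  have hfe : ∀ z ∈ A, X (f e) < X (f z) := fun z hz => by
    linarith [hK e, min_le_right (X w) (c - K - 1), hc (mem_image_of_mem _ hz)]
  obtain ⟨z, hzA, hz⟩ := exists_mem_segment_of_image_crosses hXY hf hinj hA
    (fun z hz => ⟨hfe z hz, hX z hz⟩) ha hb fun z hz => hY z (hseg hz)
  exact ⟨z, hzA, hseg hz, hle hz⟩

end LinearCoordinates

section LatticeEquivariant

variable {d : ℕ} {F : E d → E d}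

/-- A self-map of `ℝ^d` commuting with the integer translations, as lifts of torus maps homotopic
to the identity do. -/
def LatticeEquivariant (F : E d → E d) : Prop := ∀ z, ∀ m ∈ ZLat d, F (z + m) = F z + m

lemma LatticeEquivariant.iterate (hF : LatticeEquivariant F) (n : ℕ) :
    LatticeEquivariant F^[n] := fun z m hm =>
  Function.Commute.iterate_left (g := (· + m)) (fun z => hF z m hm) n z

lemma exists_mem_ZLat_norm_sub_le (p : E d) : ∃ m ∈ ZLat d, ‖p - m‖ ≤ √d := by
  refine ⟨WithLp.toLp 2 fun i => (⌊p i⌋ : ℝ), fun i => ⟨⌊p i⌋, rfl⟩, ?_⟩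
  rw [EuclideanSpace.norm_eq]
  refine Real.sqrt_le_sqrt ((Finset.sum_le_card_nsmul _ _ 1 fun i _ => ?_).trans_eq (by simp))
  change ‖p i - ⌊p i⌋‖ ^ 2 ≤ 1
  rw [Int.self_sub_floor, Real.norm_of_nonneg (Int.fract_nonneg _)]
  exact pow_le_one₀ (Int.fract_nonneg _) (Int.fract_lt_one _).le

lemma LatticeEquivariant.exists_near_sub_eq (hF : LatticeEquivariant F) (z p : E d) :
    ∃ w, ‖w - p‖ ≤ √d ∧ F w - w = F z - z := by
  obtain ⟨m, hm, hpm⟩ := exists_mem_ZLat_norm_sub_le (p - z)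
  refine ⟨z + m, ?_, by rw [hF z m hm, add_sub_add_right_eq_sub]⟩
  rwa [← norm_neg, neg_sub, ← sub_sub]

lemma LatticeEquivariant.exists_coordinates_near (hF : LatticeEquivariant F) {X Y : E d →L[ℝ] ℝ}
    (hXY : Function.Bijective (X.prod Y)) :
    ∃ R, ∀ n z x y, ∃ w, |X w - x| ≤ R ∧ |Y w - y| ≤ R ∧ F^[n] w - w = F^[n] z - z := by
  refine ⟨max ‖X‖ ‖Y‖ * √d, fun n z x y => ?_⟩
  obtain ⟨p, rfl, rfl⟩ := exists_coordinates_eq hXY x y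
  obtain ⟨w, hwp, hw⟩ := (hF.iterate n).exists_near_sub_eq z p
  refine ⟨w, ?_, ?_, hw⟩
  · rw [← map_sub]
    exact (X.le_opNorm _).trans (mul_le_mul (le_max_left _ _) hwp (by positivity) (by positivity))
  · rw [← map_sub]
    exact (Y.le_opNorm _).trans (mul_le_mul (le_max_right _ _) hwp (by positivity) (by positivity))

lemma LatticeEquivariant.exists_norm_iterate_sub_le (hF : LatticeEquivariant F)
    (hcont : Continuous F) : ∃ D, ∀ n z, ‖F^[n] z - z‖ ≤ D * n := by
  obtain ⟨D, hD⟩ := (isCompact_closedBall (0 : E d) √d).exists_bound_of_continuousOn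
    (f := fun z => F z - z) (by fun_prop)
  have hstep : ∀ z, ‖F z - z‖ ≤ D := fun z => by
    obtain ⟨w, hw, hwz⟩ := hF.exists_near_sub_eq z 0
    exact hwz ▸ hD w (by simpa using hw)
  refine ⟨D, fun n z => ?_⟩
  have h := dist_le_range_sum_of_dist_le (f := fun k => F^[k] z) (d := fun _ => D) n fun {k} _ => by
    rw [dist_comm, dist_eq_norm, Function.iterate_succ_apply']
    exact hstep _
  rw [dist_comm, dist_eq_norm] at h
  simpa [mul_comm] using h

lemma LatticeEquivariant.exists_abs_iterate_sub_le (hF : LatticeEquivariant F)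
    (hcont : Continuous F) (φ : E d →L[ℝ] ℝ) :
    ∃ C > 0, ∀ n z, |φ (F^[n] z) - φ z| ≤ C * n := by
  obtain ⟨D, hD⟩ := hF.exists_norm_iterate_sub_le hcont
  refine ⟨max 1 (‖φ‖ * D), by positivity, fun n z => ?_⟩
  rw [← map_sub]
  calc |φ (F^[n] z - z)| ≤ ‖φ‖ * ‖F^[n] z - z‖ := φ.le_opNorm _
    _ ≤ ‖φ‖ * (D * n) := by gcongr; exact hD n z
    _ = ‖φ‖ * D * n := by ring
    _ ≤ max 1 (‖φ‖ * D) * n := by gcongr; exact le_max_right _ _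

end LatticeEquivariant

section RotationVectors

lemma eventually_le_mul_natCast (K : ℝ) {ε : ℝ} (hε : 0 < ε) : ∀ᶠ n : ℕ in atTop, K ≤ ε * n :=
  (tendsto_natCast_atTop_atTop.const_mul_atTop hε).eventually_ge_atTop K

lemma eventually_exists_natCast_mem_Icc {δ : ℝ} (hδ : 0 < δ) :
    ∀ᶠ n : ℕ in atTop, ∃ t : ℕ, 1 ≤ t ∧ δ / 2 * n ≤ t ∧ t ≤ δ * n := by
  filter_upwards [eventually_le_mul_natCast 2 hδ] with n hn
  refine ⟨⌊δ * n⌋₊, Nat.le_floor (by push_cast; linarith), ?_, Nat.floor_le (by positivity)⟩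
  linarith [Nat.sub_one_lt_floor (δ * n)]

variable {d : ℕ} {F : E d → E d} {W : Set (E d)} {φ : E d →L[ℝ] ℝ} {c : ℝ}

lemma abs_iterate_sub_iterate_le {C : ℝ} (hC : ∀ n z, |φ (F^[n] z) - φ z| ≤ C * n) (i j : ℕ)
    (z : E d) : |φ (F^[i] z) - φ (F^[j] z)| ≤ C * |(i : ℝ) - j| := by
  wlog hji : j ≤ i generalizing i j
  · rw [abs_sub_comm, abs_sub_comm (i : ℝ)]
    exact this j i (le_of_not_ge hji)
  obtain ⟨k, rfl⟩ := Nat.exists_eq_add_of_le' hji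
  simpa [Function.iterate_add_apply] using hC k (F^[j] z)

lemma LatticeEquivariant.exists_mem_rotRel_tendsto_subseq (hF : LatticeEquivariant F)
    (hcont : Continuous F) {n : ℕ → ℕ} (hn : Tendsto n atTop atTop) {z : ℕ → E d}
    (hz : ∀ i, z i ∈ W) :
    ∃ ρ ∈ rotRel F W, ∃ k : ℕ → ℕ, StrictMono k ∧
      Tendsto (fun i => (n (k i) : ℝ)⁻¹ • (F^[n (k i)] (z (k i)) - z (k i))) atTop (𝓝 ρ) := by
  obtain ⟨D, hD⟩ := hF.exists_norm_iterate_sub_le hcont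
  have hD0 : 0 ≤ D := by simpa using (norm_nonneg _).trans (hD 1 0)
  have hball : ∀ i, (n i : ℝ)⁻¹ • (F^[n i] (z i) - z i) ∈ closedBall (0 : E d) D := fun i => by
    rw [mem_closedBall_zero_iff, norm_smul, norm_inv, Real.norm_natCast]
    exact inv_mul_le_of_le_mul₀ (by positivity) hD0 ((hD _ _).trans_eq (mul_comm _ _))
  obtain ⟨ρ, -, k, hk, hρ⟩ := (isCompact_closedBall _ _).tendsto_subseq hball
  exact ⟨ρ, ⟨n ∘ k, z ∘ k, hn.comp hk.tendsto_atTop, fun i => hz _, hρ⟩, k, hk, hρ⟩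

lemma rotRel_mono {W' : Set (E d)} (h : W ⊆ W') : rotRel F W ⊆ rotRel F W' :=
  fun _ ⟨n, z, hn, hz, hlim⟩ => ⟨n, z, hn, fun i => h (hz i), hlim⟩

lemma LatticeEquivariant.rotRel_nonempty (hF : LatticeEquivariant F) (hcont : Continuous F)
    (hW : W.Nonempty) : (rotRel F W).Nonempty := by
  obtain ⟨z, hz⟩ := hW
  obtain ⟨ρ, hρ, -⟩ := hF.exists_mem_rotRel_tendsto_subseq hcont tendsto_id fun _ : ℕ => hz
  exact ⟨ρ, hρ⟩

lemma LatticeEquivariant.eventually_iterate_sub_le (hF : LatticeEquivariant F)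
    (hcont : Continuous F) (hφ : ∀ ρ ∈ rotRel F W, φ ρ ≤ c) {ε : ℝ} (hε : 0 < ε) :
    ∀ᶠ n : ℕ in atTop, ∀ z ∈ W, φ (F^[n] z) - φ z ≤ (c + ε) * n := by
  by_contra h
  have hfreq : ∃ᶠ n : ℕ in atTop, 0 < n ∧ ∃ z ∈ W, (c + ε) * n < φ (F^[n] z) - φ z := by
    simp only [not_eventually, not_forall, not_le, exists_prop] at h
    exact (h.and_eventually (eventually_gt_atTop 0)).mono fun n hn => hn.symm
  obtain ⟨n, hn, hbig⟩ := extraction_of_frequently_atTop hfreq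
  choose hpos z hz hzbig using hbig
  obtain ⟨ρ, hρ, k, -, hlim⟩ := hF.exists_mem_rotRel_tendsto_subseq hcont hn.tendsto_atTop hz
  have hge : c + ε ≤ φ ρ := ge_of_tendsto' ((φ.continuous.tendsto ρ).comp hlim) fun i => by
    have hni : (0 : ℝ) < n (k i) := Nat.cast_pos.2 (hpos _)
    rw [Function.comp_apply, map_smul, smul_eq_mul, map_sub, le_inv_mul_iff₀' hni]
    exact (hzbig _).le
  linarith [hφ ρ hρ]

lemma LatticeEquivariant.eventually_iterate_le (hF : LatticeEquivariant F)
    (hcont : Continuous F) (hW : Bornology.IsBounded W) (hφ : ∀ ρ ∈ rotRel F W, φ ρ ≤ c) {ε : ℝ}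
    (hε : 0 < ε) : ∀ᶠ n : ℕ in atTop, ∀ z ∈ W, φ (F^[n] z) ≤ (c + ε) * n := by
  obtain ⟨K, hK⟩ := (φ.lipschitz.isBounded_image hW).bddAbove
  filter_upwards [hF.eventually_iterate_sub_le hcont hφ (half_pos hε),
    eventually_le_mul_natCast K (half_pos hε)] with n hn hKn z hz
  linarith [hn z hz, hK (mem_image_of_mem φ hz)]

lemma LatticeEquivariant.eventually_iterate_add_lt (hF : LatticeEquivariant F)
    (hcont : Continuous F) (hW : Bornology.IsBounded W) (hφ : ∀ ρ ∈ rotRel F W, φ ρ ≤ c) {c' : ℝ}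
    (hc : c < c') (K : ℝ) : ∀ᶠ n : ℕ in atTop, ∀ z ∈ W, φ (F^[n] z) + K < c' * n := by
  obtain ⟨ε, hε, hεc⟩ : ∃ ε > 0, c + 2 * ε = c' := ⟨(c' - c) / 2, by linarith, by ring⟩
  filter_upwards [hF.eventually_iterate_le hcont hW hφ hε,
    eventually_le_mul_natCast (K + 1) hε] with n hn hKn z hz
  rw [← hεc]
  linarith [hn z hz]

lemma LatticeEquivariant.eventually_abs_iterate_sub_sub_le (hF : LatticeEquivariant F)
    (hcont : Continuous F) (hφ : ∀ ρ ∈ rotRel F W, φ ρ = c) {ε : ℝ} (hε : 0 < ε) :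
    ∀ᶠ n : ℕ in atTop, ∀ z ∈ W, |φ (F^[n] z) - φ z - c * n| ≤ ε * n := by
  filter_upwards [hF.eventually_iterate_sub_le hcont (fun ρ hρ => (hφ ρ hρ).le) hε,
    hF.eventually_iterate_sub_le (φ := -φ) (c := -c) hcont
      (fun ρ hρ => (congrArg Neg.neg (hφ ρ hρ)).le) hε] with n hle hge z hz
  have h := hge z hz
  simp only [neg_apply] at h
  exact abs_le.2 ⟨by linarith, by linarith [hle z hz]⟩

lemma LatticeEquivariant.eventually_abs_iterate_sub_mul_le (hF : LatticeEquivariant F)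
    (hcont : Continuous F) (hW : Bornology.IsBounded W) (hφ : ∀ ρ ∈ rotRel F W, φ ρ = c) {ε : ℝ}
    (hε : 0 < ε) : ∀ᶠ n : ℕ in atTop, ∀ z ∈ W, |φ (F^[n] z) - c * n| ≤ ε * n := by
  obtain ⟨K, hK⟩ := (φ.lipschitz.isBounded_image hW).exists_norm_le
  filter_upwards [hF.eventually_abs_iterate_sub_sub_le hcont hφ (half_pos hε),
    eventually_le_mul_natCast K (half_pos hε)] with n hn hKn z hz
  have hz' := abs_le.1 (hK _ (mem_image_of_mem φ hz))
  have h := abs_le.1 (hn z hz)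
  exact abs_le.2 ⟨by linarith, by linarith⟩

lemma le_of_mem_rotRel_of_iterate_sub_le {K : ℝ} (h : ∀ n, ∀ z ∈ W, φ (F^[n] z) - φ z ≤ c * n + K)
    {ρ : E d} (hρ : ρ ∈ rotRel F W) : φ ρ ≤ c := by
  obtain ⟨n, z, hn, hz, hlim⟩ := hρ
  have hinv : Tendsto (fun i => (n i : ℝ)⁻¹) atTop (𝓝 0) :=
    tendsto_inv_atTop_nhds_zero_nat.comp hn
  have hbound : Tendsto (fun i => c + (n i : ℝ)⁻¹ * K) atTop (𝓝 c) := by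
    simpa using tendsto_const_nhds.add (hinv.mul_const K)
  refine le_of_tendsto_of_tendsto ((φ.continuous.tendsto ρ).comp hlim) hbound ?_
  filter_upwards [hn.eventually_gt_atTop 0] with i hi
  have hni : (0 : ℝ) < n i := Nat.cast_pos.2 hi
  rw [Function.comp_apply, map_smul, smul_eq_mul, map_sub, inv_mul_le_iff₀ hni, mul_add,
    mul_inv_cancel_left₀ hni.ne', mul_comm]
  exact h _ _ (hz i)

lemma LatticeEquivariant.iterate_sub_le_of_forall_sub_le (hF : LatticeEquivariant F)
    (hcont : Continuous F) {t : ℕ} (ht : 0 < t) (h : ∀ z, φ (F^[t] z) - φ z ≤ c * t) :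
    ∃ K, ∀ n z, φ (F^[n] z) - φ z ≤ c * n + K := by
  obtain ⟨C, hC, hCn⟩ := hF.exists_abs_iterate_sub_le hcont φ
  have hmul : ∀ q z, φ (F^[t * q] z) - φ z ≤ c * (t * q) := fun q z => by
    induction q with
    | zero => simp
    | succ q ih =>
      rw [mul_add_one, add_comm, Function.iterate_add_apply]
      push_cast
      linarith [h (F^[t * q] z)]
  refine ⟨(C + |c|) * t, fun n z => ?_⟩
  have hrest := (le_abs_self _).trans (hCn (n % t) (F^[t * (n / t)] z))
  rw [← Function.iterate_add_apply, Nat.mod_add_div] at hrest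
  have hr : ((n % t : ℕ) : ℝ) ≤ t := Nat.cast_le.2 (Nat.mod_lt n ht).le
  have hn : (n : ℝ) = (n % t : ℕ) + t * (n / t : ℕ) := by exact_mod_cast (Nat.mod_add_div n t).symm
  have hc : -c * (n % t : ℕ) ≤ |c| * t :=
    mul_le_mul (neg_le_abs c) hr (Nat.cast_nonneg _) (abs_nonneg c)
  have hC' : C * (n % t : ℕ) ≤ C * t := by gcongr
  rw [hn]
  linarith [hmul (n / t) z]

lemma LatticeEquivariant.exists_lt_iterate_sub (hF : LatticeEquivariant F)
    (hcont : Continuous F) {ρ : E d} (hρ : ρ ∈ rotSet F) (hc : c < φ ρ) {t : ℕ} (ht : 0 < t) :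
    ∃ z, c * t < φ (F^[t] z) - φ z := by
  by_contra! h
  obtain ⟨K, hK⟩ := hF.iterate_sub_le_of_forall_sub_le hcont ht h
  exact hc.not_ge (le_of_mem_rotRel_of_iterate_sub_le (fun n z _ => hK n z) hρ)

end RotationVectors

section OrbitBlock

/-- The union of the iterates `F^j(U)`, `m ≤ j ≤ M`: an orbit segment of the set `U`, which is
connected when `U` is connected and meets its image. -/
def orbitBlock {α : Type*} (F : α → α) (U : Set α) (m M : ℕ) : Set α :=
  ⋃ j ∈ Icc m M, F^[j] '' U

variable {α : Type*} {F : α → α} {U : Set α} {m M : ℕ}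

lemma mem_orbitBlock {z : α} : z ∈ orbitBlock F U m M ↔ ∃ j ∈ Icc m M, ∃ u ∈ U, F^[j] u = z := by
  simp only [orbitBlock, mem_iUnion, exists_prop, mem_image]

lemma isPreconnected_orbitBlock [TopologicalSpace α] (hF : Continuous F) (hU : IsPreconnected U)
    (hmeet : (F '' U ∩ U).Nonempty) : IsPreconnected (orbitBlock F U m M) := by
  refine IsPreconnected.biUnion_of_chain ordConnected_Icc
    (fun j _ => hU.image _ (hF.iterate j).continuousOn) fun j _ _ => ?_
  obtain ⟨_, ⟨u, hu, rfl⟩, hFu⟩ := hmeet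
  exact ⟨F^[j] (F u), mem_image_of_mem _ hFu, u, hu, Function.iterate_succ_apply F j u⟩

lemma isBounded_image_of_continuous {V W : Type*} [PseudoMetricSpace V] [ProperSpace V]
    [PseudoMetricSpace W] {f : V → W} (hf : Continuous f) {S : Set V}
    (hS : Bornology.IsBounded S) : Bornology.IsBounded (f '' S) :=
  (hS.isCompact_closure.image hf).isBounded.subset (image_mono subset_closure)

lemma isBounded_orbitBlock [PseudoMetricSpace α] [ProperSpace α] (hF : Continuous F)
    (hU : Bornology.IsBounded U) : Bornology.IsBounded (orbitBlock F U m M) :=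
  (Bornology.isBounded_biUnion (finite_Icc m M)).2 fun j _ =>
    isBounded_image_of_continuous (hF.iterate j) hU

end OrbitBlock

section Crossing

variable {F : E 2 → E 2} {X Y : E 2 →L[ℝ] ℝ}

lemma LatticeEquivariant.exists_mem_le_of_image_le (hF : LatticeEquivariant F)
    (hcont : Continuous F) (hinj : Function.Injective F) (hXY : Function.Bijective (X.prod Y))
    {σ : E 2} (hσ : σ ∈ rotSet F) {c : ℝ} (hc : c < X σ) :
    ∃ R, ∀ t : ℕ, 0 < t → ∀ s κ, (∀ z, |Y (F^[t] z) - Y z - s| ≤ κ) → ∀ A, IsPreconnected A →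
      Bornology.IsBounded A → ∀ x y, (∀ z ∈ A, X (F^[t] z) ≤ x + c * t) →
      ∀ a ∈ A, ∀ b ∈ A, Y a + 2 * κ + R < y → y + 2 * κ + R < Y b →
      ∃ z ∈ A, |Y z - y| ≤ R ∧ X z ≤ x + R := by
  obtain ⟨R, hR⟩ := hF.exists_coordinates_near hXY
  obtain ⟨C, -, hC⟩ := hF.exists_abs_iterate_sub_le hcont X
  refine ⟨2 * R, fun t ht s κ hs A hA hAb x y hx a ha b hb hya hyb => ?_⟩
  obtain ⟨q, hq⟩ := hF.exists_lt_iterate_sub hcont hσ hc ht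
  obtain ⟨w, hwX, hwY, hw⟩ := hR t q (x + R) y
  have hR0 : 0 ≤ R := (abs_nonneg _).trans hwX
  rw [abs_le] at hwX hwY
  have hXw : x + c * t < X (F^[t] w) := by
    have := congrArg X hw
    rw [map_sub, map_sub] at this
    linarith
  have hbdd : BddBelow ((fun z => X (F^[t] z)) '' A) :=
    (isBounded_image_of_continuous (X.continuous.comp (hcont.iterate t)) hAb).bddBelow
  obtain ⟨z, hz, hzY, hzX⟩ := exists_mem_halfLine_of_image_crosses hXY (hcont.iterate t)
    (hinj.iterate t) (K := C * t) (fun z => by linarith [le_of_abs_le (hC t z)]) hA hbdd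
    (fun z hz => (hx z hz).trans_lt hXw) ha hb fun z hz => by
      have ha' := abs_le.1 (hs a)
      have hb' := abs_le.1 (hs b)
      have hz' := abs_le.1 (hs z)
      constructor <;> linarith
  exact ⟨z, hz, abs_le.2 ⟨by linarith, by linarith⟩, by linarith⟩

end Crossing

section Width

variable {F : E 2 → E 2} {X Y : E 2 →L[ℝ] ℝ} {U : Set (E 2)} {L : ℝ}

lemma LatticeEquivariant.exists_width_le (hF : LatticeEquivariant F)
    (hcont : Continuous F) (hinj : Function.Injective F) (hXY : Function.Bijective (X.prod Y))
    (hUb : Bornology.IsBounded U) (hU : IsPreconnected U) {σ : E 2} (hσ : σ ∈ rotSet F) {c : ℝ}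
    (hc : c < X σ) :
    ∃ R, ∀ t : ℕ, 0 < t → ∀ κ, (∀ z, |Y (F^[t] z) - Y z| ≤ κ) → ∀ n x,
      (∀ u ∈ U, x + R < X (F^[n] u)) → (∀ u ∈ U, X (F^[t + n] u) ≤ x + c * t) →
      ∀ z ∈ U, ∀ z' ∈ U, Y (F^[n] z') - Y (F^[n] z) ≤ 4 * κ + 2 * R := by
  obtain ⟨R, hR⟩ := hF.exists_mem_le_of_image_le hcont hinj hXY hσ hc
  refine ⟨R, fun t ht κ hκ n x hx hxt z hz z' hz' => ?_⟩
  by_contra! hwide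
  obtain ⟨_, ⟨u, hu, rfl⟩, -, hXu⟩ := hR t ht 0 κ (by simpa using hκ)
    (F^[n] '' U) (hU.image _ (hcont.iterate n).continuousOn)
    (isBounded_image_of_continuous (hcont.iterate n) hUb) x ((Y (F^[n] z) + Y (F^[n] z')) / 2)
    (by rintro _ ⟨u, hu, rfl⟩; exact Function.iterate_add_apply F t n u ▸ hxt u hu)
    _ (mem_image_of_mem _ hz) _ (mem_image_of_mem _ hz') (by linarith) (by linarith)
  exact (hx u hu).not_ge hXu

lemma LatticeEquivariant.eventually_width_le_of_lt (hF : LatticeEquivariant F)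
    (hcont : Continuous F) (hinj : Function.Injective F) (hXY : Function.Bijective (X.prod Y))
    (hUb : Bornology.IsBounded U) (hU : IsPreconnected U) (hX : ∀ ρ ∈ rotRel F U, X ρ = L)
    {σ : E 2} (hσ : σ ∈ rotSet F) (hσL : L < X σ) {ε : ℝ} (hε : 0 < ε) :
    ∀ᶠ n : ℕ in atTop, ∀ z ∈ U, ∀ z' ∈ U, Y (F^[n] z') - Y (F^[n] z) ≤ ε * n := by
  obtain ⟨C, hC, hCY⟩ := hF.exists_abs_iterate_sub_le hcont Y
  obtain ⟨η, hη, hησ⟩ : ∃ η > 0, L + η < X σ := ⟨(X σ - L) / 2, by linarith, by linarith⟩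
  obtain ⟨R, hR⟩ := hF.exists_width_le hcont hinj hXY hUb hU hσ hησ
  obtain ⟨δ, hδ, hδ1, hCδ⟩ : ∃ δ > 0, δ ≤ 1 ∧ C * δ ≤ ε / 8 :=
    ⟨min 1 (ε / (8 * C)), by positivity, min_le_left _ _,
      (mul_le_mul_of_nonneg_left (min_le_right _ _) hC.le).trans_eq (by field_simp)⟩
  obtain ⟨θ, hθ, hθη⟩ : ∃ θ > 0, 8 * θ = η * δ := ⟨η * δ / 8, by positivity, by ring⟩
  obtain ⟨N, hN⟩ := eventually_atTop.1 (hF.eventually_abs_iterate_sub_mul_le hcont hUb hX hθ)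
  filter_upwards [eventually_ge_atTop N, eventually_exists_natCast_mem_Icc hδ,
    eventually_le_mul_natCast (R + 1) hθ,
    eventually_le_mul_natCast R (by positivity : 0 < ε / 4)] with
    n hn ⟨t, ht, htδ, htδ'⟩ hRθ hRε z hz z' hz'
  have hCt : C * t ≤ ε / 8 * n := calc
    C * t ≤ C * (δ * n) := by gcongr
    _ ≤ ε / 8 * n := by rw [← mul_assoc]; gcongr
  have hθn : 4 * (θ * n) ≤ η * t := calc
    4 * (θ * n) = η * (δ / 2 * n) := by linear_combination n / 2 * hθη
    _ ≤ η * t := by gcongr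
  have hθt : θ * t ≤ θ * n :=
    mul_le_mul_of_nonneg_left (htδ'.trans (mul_le_of_le_one_left n.cast_nonneg hδ1)) hθ.le
  have hlow : ∀ u ∈ U, (L - 2 * θ) * n + R < X (F^[n] u) := fun u hu => by
    linarith [neg_le_of_abs_le (hN n hn u hu)]
  have hup : ∀ u ∈ U, X (F^[t + n] u) ≤ (L - 2 * θ) * n + (L + η) * t := fun u hu => by
    have h := le_of_abs_le (hN (t + n) (hn.trans (Nat.le_add_left n t)) u hu)
    push_cast at h
    linarith
  linarith [hR t ht _ (hCY t) n _ hlow hup z hz z' hz']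

lemma LatticeEquivariant.eventually_width_le (hF : LatticeEquivariant F)
    (hcont : Continuous F) (hinj : Function.Injective F) (hXY : Function.Bijective (X.prod Y))
    (hUb : Bornology.IsBounded U) (hU : IsPreconnected U) (hX : ∀ ρ ∈ rotRel F U, X ρ = L)
    {σ : E 2} (hσ : σ ∈ rotSet F) (hσL : X σ ≠ L) {ε : ℝ} (hε : 0 < ε) :
    ∀ᶠ n : ℕ in atTop, ∀ z ∈ U, ∀ z' ∈ U, Y (F^[n] z') - Y (F^[n] z) ≤ ε * n := by
  rcases hσL.lt_or_gt with hlt | hgt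
  · exact hF.eventually_width_le_of_lt (X := -X) hcont hinj (bijective_coordinates_neg_left hXY)
      hUb hU (fun ρ hρ => congrArg Neg.neg (hX ρ hρ)) hσ (neg_lt_neg hlt) hε
  · exact hF.eventually_width_le_of_lt hcont hinj hXY hUb hU hX hσ hgt hε

end Width

section MaximalDrift

variable {F : E 2 → E 2} {X Y : E 2 →L[ℝ] ℝ} {U : Set (E 2)} {L : ℝ}

lemma frequently_le_iterate (hUb : Bornology.IsBounded U)
    (hwidth : ∀ ε > 0, ∀ᶠ n : ℕ in atTop, ∀ z ∈ U, ∀ z' ∈ U, Y (F^[n] z') - Y (F^[n] z) ≤ ε * n)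
    {ρ : E 2} (hρ : ρ ∈ rotRel F U) (hρY : Y ρ = 0) {ε : ℝ} (hε : 0 < ε) :
    ∃ᶠ n : ℕ in atTop, ∀ u ∈ U, -(ε * n) ≤ Y (F^[n] u) := by
  obtain ⟨n, z, hn, hz, hlim⟩ := hρ
  obtain ⟨K, hK⟩ := (Y.lipschitz.isBounded_image hUb).exists_norm_le
  have hε3 : 0 < ε / 3 := by positivity
  have hlimY : Tendsto (fun i => (n i : ℝ)⁻¹ * (Y (F^[n i] (z i)) - Y (z i))) atTop (𝓝 0) := by
    simpa [Function.comp_def, hρY] using (Y.continuous.tendsto ρ).comp hlim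
  refine hn.frequently (Eventually.frequently ?_)
  filter_upwards [hlimY.eventually_const_lt (neg_lt_zero.2 hε3), hn.eventually_gt_atTop 0,
    hn.eventually (hwidth (ε / 3) hε3), hn.eventually (eventually_le_mul_natCast K hε3)]
    with i hlow hpos hwide hKn u hu
  rw [lt_inv_mul_iff₀' (Nat.cast_pos.2 hpos)] at hlow
  linarith [hwide u hu (z i) (hz i), neg_le_of_abs_le (hK _ (mem_image_of_mem Y (hz i)))]

lemma LatticeEquivariant.exists_iterate_le_of_image_le (hF : LatticeEquivariant F)
    (hcont : Continuous F) (hinj : Function.Injective F) (hXY : Function.Bijective (X.prod Y))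
    (hUb : Bornology.IsBounded U) (hU : IsPreconnected U) (hmeet : (F '' U ∩ U).Nonempty)
    {σ : E 2} (hσ : σ ∈ rotSet F) {c : ℝ} (hc : c < Y σ) :
    ∃ R, ∀ t : ℕ, 0 < t → ∀ s κ, (∀ z, |X (F^[t] z) - X z - s| ≤ κ) → ∀ m M, m ≤ M → ∀ x y,
      (∀ u ∈ U, X (F^[m] u) + 2 * κ + R < x) → (∀ u ∈ U, x + 2 * κ + R < X (F^[M] u)) →
      (∀ j ∈ Icc m M, ∀ u ∈ U, Y (F^[t + j] u) ≤ y + c * t) →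
      ∃ j ∈ Icc m M, ∃ u ∈ U, |X (F^[j] u) - x| ≤ R ∧ Y (F^[j] u) ≤ y + R := by
  obtain ⟨R, hR⟩ :=
    hF.exists_mem_le_of_image_le hcont hinj (bijective_coordinates_swap hXY) hσ hc
  obtain ⟨_, -, hu₀⟩ := id hmeet
  refine ⟨R, fun t ht s κ hs m M hmM x y hm hM hY => ?_⟩
  obtain ⟨_, hz, hzX, hzY⟩ := hR t ht s κ hs _ (isPreconnected_orbitBlock hcont hU hmeet)
    (isBounded_orbitBlock hcont hUb) y x
    (fun z hz => by
      obtain ⟨j, hj, u, hu, rfl⟩ := mem_orbitBlock.1 hz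
      exact Function.iterate_add_apply F t j u ▸ hY j hj u hu)
    _ (mem_orbitBlock.2 ⟨m, left_mem_Icc.2 hmM, _, hu₀, rfl⟩)
    _ (mem_orbitBlock.2 ⟨M, right_mem_Icc.2 hmM, _, hu₀, rfl⟩) (hm _ hu₀) (hM _ hu₀)
  obtain ⟨j, hj, u, hu, rfl⟩ := mem_orbitBlock.1 hz
  exact ⟨j, hj, u, hu, hzX, hzY⟩

lemma LatticeEquivariant.eventually_exists_iterate_le (hF : LatticeEquivariant F)
    (hcont : Continuous F) (hinj : Function.Injective F) (hXY : Function.Bijective (X.prod Y))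
    (hUb : Bornology.IsBounded U) (hU : IsPreconnected U) (hmeet : (F '' U ∩ U).Nonempty)
    (hX : ∀ ρ ∈ rotRel F U, X ρ = L) (hY : ∀ ρ ∈ rotRel F U, Y ρ ≤ 0)
    {σ : E 2} (hσ : σ ∈ rotSet F) {c : ℝ} (hc : c < Y σ) {τ β : ℕ} (hτ : 0 < τ) (hβ : 0 < β)
    {s κ x : ℝ} (hs : ∀ᶠ q : ℕ in atTop, ∀ z, |X (F^[τ * q] z) - X z - s * q| ≤ κ * q)
    (hLx : L + 2 * κ < x) (hxL : x + 2 * κ < L * β) {ε : ℝ} (hε : 0 < ε) :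
    ∀ᶠ q : ℕ in atTop, ∃ j ≤ β * q, |L * j - x * q| ≤ ε * q ∧
      ∃ u ∈ U, Y (F^[j] u) ≤ (ε - c * τ) * q := by
  obtain ⟨R, hR⟩ := hF.exists_iterate_le_of_image_le hcont hinj hXY hUb hU hmeet hσ hc
  obtain ⟨θ, hθ, hθε⟩ := exists_pos_mul_lt hε (τ + β + 1 : ℝ)
  obtain ⟨N, hN⟩ := eventually_atTop.1 ((hF.eventually_abs_iterate_sub_mul_le hcont hUb hX hθ).and
    (hF.eventually_iterate_le hcont hUb hY hθ))
  have hstart := hF.eventually_iterate_add_lt hcont hUb (fun ρ hρ => (hX ρ hρ).le)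
    (lt_sub_iff_add_lt.2 hLx) R
  have hend := hF.eventually_iterate_add_lt (φ := -X) (c := -L) (c' := -((x + 2 * κ) / β)) hcont hUb
    (fun ρ hρ => (congrArg Neg.neg (hX ρ hρ)).le)
    (neg_lt_neg ((div_lt_iff₀ (Nat.cast_pos.2 hβ)).2 hxL)) R
  filter_upwards [eventually_ge_atTop N, eventually_gt_atTop 0, hs, eventually_le_mul_natCast R hθ,
    hstart, (tendsto_id.const_mul_atTop' hβ).eventually hend] with q hNq hq hsq hRq hstart hend
  have hqβ : q ≤ β * q := Nat.le_mul_of_pos_left q hβ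
  have hθj : ∀ j : ℕ, j ≤ β * q → θ * j ≤ θ * (β * q) := fun j hj => by
    gcongr
    exact_mod_cast hj
  have hθτ : 0 ≤ θ * (τ * q) := by positivity
  replace hθε := mul_lt_mul_of_pos_right hθε (Nat.cast_pos.2 hq)
  replace hend : ∀ u ∈ U, x * q + 2 * (κ * q) + R < X (F^[β * q] u) := fun u hu => by
    have h := hend u hu
    simp only [id, neg_apply, Nat.cast_mul, neg_mul, ← mul_assoc,
      div_mul_cancel₀ _ (Nat.cast_ne_zero (R := ℝ).2 hβ.ne')] at h
    linarith
  have hup : ∀ j ∈ Icc q (β * q), ∀ u ∈ U,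
      Y (F^[τ * q + j] u) ≤ (θ * (τ + β) - c * τ) * q + c * ↑(τ * q) := fun j hj u hu => by
    have h := (hN (τ * q + j) (hNq.trans (hj.1.trans (Nat.le_add_left _ _)))).2 u hu
    push_cast at h ⊢
    linarith [hθj j hj.2]
  obtain ⟨j, ⟨hqj, hj⟩, u, hu, hjX, hjY⟩ := hR (τ * q) (by positivity) (s * q) (κ * q) hsq q (β * q)
    hqβ (x * q) _ (fun u hu => by linarith [hstart u hu]) hend hup
  refine ⟨j, hj, ?_, u, hu, by linarith⟩
  have hjL := abs_le.1 ((hN j (hNq.trans hqj)).1 u hu)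
  rw [abs_le] at hjX ⊢
  constructor <;> linarith [hθj j hj]

lemma LatticeEquivariant.le_zero_of_forall_eq (hF : LatticeEquivariant F)
    (hcont : Continuous F) (hinj : Function.Injective F) (hXY : Function.Bijective (X.prod Y))
    (hUb : Bornology.IsBounded U) (hU : IsPreconnected U) (hmeet : (F '' U ∩ U).Nonempty)
    (hL : 0 < L) (hX : ∀ ρ ∈ rotSet F, X ρ = L) (hY : ∀ ρ ∈ rotRel F U, Y ρ ≤ 0)
    {σ : E 2} (hσ : σ ∈ rotSet F) : Y σ ≤ 0 := by
  by_contra! hpos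
  obtain ⟨η, hη, hησ⟩ : ∃ η > 0, η < Y σ := exists_between hpos
  obtain ⟨C, hC, hCY⟩ := hF.exists_abs_iterate_sub_le hcont Y
  obtain ⟨K, hK⟩ := (Y.lipschitz.isBounded_image hUb).exists_norm_le
  obtain ⟨T, hT⟩ := exists_nat_gt (max 0 ((3 * C + 2) / η))
  obtain ⟨hT0, hT⟩ := max_lt_iff.1 hT
  have hdrift : ∀ᶠ q : ℕ in atTop, ∀ z, |X (F^[T * q] z) - X z - L * T * q| ≤ L / 3 * q := by
    filter_upwards [(tendsto_id.const_mul_atTop' (Nat.cast_pos.1 hT0)).eventually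
      (hF.eventually_abs_iterate_sub_sub_le hcont hX (by positivity : 0 < L / 3 / T))] with q hq z
    have h := hq z trivial
    simp only [id, Nat.cast_mul] at h
    rwa [← mul_assoc, ← mul_assoc (L / 3 / T), div_mul_cancel₀ _ hT0.ne'] at h
  obtain ⟨q, ⟨j, hj, -, u, hu, hlow⟩, hKq, hq⟩ := ((hF.eventually_exists_iterate_le (x := 2 * L)
    hcont hinj hXY hUb hU hmeet (fun ρ hρ => hX ρ (rotRel_mono (subset_univ U) hρ)) hY hσ hησ
    (Nat.cast_pos.1 hT0) three_pos hdrift (by linarith) (by push_cast; linarith) one_pos).and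
    ((eventually_le_mul_natCast K one_pos).and (eventually_gt_atTop 0))).exists
  have hCj : C * j ≤ C * (3 * q) := by
    gcongr
    exact_mod_cast hj
  have hTq : (3 * C + 2) * q < η * T * q :=
    mul_lt_mul_of_pos_right ((div_lt_iff₀' hη).1 hT) (Nat.cast_pos.2 hq)
  linarith [neg_le_of_abs_le (hCY j u), neg_le_of_abs_le (hK _ (mem_image_of_mem Y hu))]

lemma abs_natCast_sub_le_of_abs_mul_sub_le {L δ : ℝ} (hL : 0 < L) {n k j : ℕ} (hk : 0 < k)
    (hj : |L * j - L * k * ↑(n / k)| ≤ δ) : |(n : ℝ) - j| ≤ k + δ / L := by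
  have hle : (k : ℝ) * ↑(n / k) ≤ n := by exact_mod_cast Nat.mul_div_le n k
  have hlt : (n : ℝ) < k * ↑(n / k) + k := by exact_mod_cast Nat.lt_mul_div_succ n hk
  rw [mul_assoc L, ← mul_sub, abs_mul, abs_of_pos hL, ← le_div_iff₀' hL] at hj
  rw [abs_le] at hj ⊢
  constructor <;> linarith

lemma LatticeEquivariant.le_zero_of_frequently_le_iterate (hF : LatticeEquivariant F)
    (hcont : Continuous F) (hinj : Function.Injective F) (hXY : Function.Bijective (X.prod Y))
    (hUb : Bornology.IsBounded U) (hU : IsPreconnected U) (hmeet : (F '' U ∩ U).Nonempty)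
    (hL : 0 < L) (hX : ∀ ρ ∈ rotRel F U, X ρ = L) (hY : ∀ ρ ∈ rotRel F U, Y ρ ≤ 0)
    (hlow : ∀ ε > 0, ∃ᶠ n : ℕ in atTop, ∀ u ∈ U, -(ε * n) ≤ Y (F^[n] u))
    {σ : E 2} (hσ : σ ∈ rotSet F) : Y σ ≤ 0 := by
  by_contra! hpos
  obtain ⟨η, hη, hησ⟩ : ∃ η > 0, η < Y σ := exists_between hpos
  obtain ⟨C, hC, hCX⟩ := hF.exists_abs_iterate_sub_le hcont X
  obtain ⟨C', hC', hCY⟩ := hF.exists_abs_iterate_sub_le hcont Y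
  obtain ⟨k, hk⟩ := exists_nat_gt ((L + 2 * C) / L)
  rw [div_lt_iff₀' hL] at hk
  have hk0 : (0 : ℝ) < k := pos_of_mul_pos_right (hk.trans' (by positivity)) hL.le
  obtain ⟨ε, hε, hεη⟩ : ∃ ε > 0, 4 * (1 + C' / L) * ε = η :=
    ⟨η / (4 * (1 + C' / L)), by positivity, mul_div_cancel₀ _ (by positivity)⟩
  have hbelow := hF.eventually_exists_iterate_le (x := L * k) (β := 2 * k) (s := 0) hcont hinj hXY
    hUb hU hmeet hX hY hσ hησ one_pos (by simpa using hk0)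
    (Eventually.of_forall fun q z => by simpa using hCX q z) hk (by push_cast; linarith) hε
  have hdiv : Tendsto (· / k) atTop atTop := Nat.tendsto_div_const_atTop (Nat.cast_pos.1 hk0).ne'
  obtain ⟨n, hn, ⟨j, -, hj, u, hu, hju⟩, hq⟩ :=
    ((hlow (η / (4 * k)) (by positivity)).and_eventually (hdiv.eventually (hbelow.and
      (eventually_le_mul_natCast (C' * k + η / 4 + 1) (half_pos hη))))).exists
  set q := n / k
  have hnj : |(n : ℝ) - j| ≤ k + ε * q / L :=
    abs_natCast_sub_le_of_abs_mul_sub_le hL (Nat.cast_pos.1 hk0) hj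
  have hjump := (le_of_abs_le (abs_iterate_sub_iterate_le hCY n j u)).trans
    (mul_le_mul_of_nonneg_left hnj hC'.le)
  have hnη : η / (4 * k) * n ≤ η / 4 * (q + 1) := by
    have hnk : (n : ℝ) ≤ k * (q + 1) := by
      exact_mod_cast (Nat.lt_mul_div_succ n (Nat.cast_pos.1 hk0)).le
    rw [← div_div, div_mul_eq_mul_div, div_le_iff₀' hk0, mul_left_comm]
    gcongr
  have hεq : ε * q + C' * (ε * q / L) = η / 4 * q := by
    rw [← hεη]
    ring
  push_cast at hju
  linarith [hn u hu]

theorem LatticeEquivariant.le_zero_of_isGreatest (hF : LatticeEquivariant F)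
    (hcont : Continuous F) (hinj : Function.Injective F) (hXY : Function.Bijective (X.prod Y))
    (hUb : Bornology.IsBounded U) (hU : IsPreconnected U) (hmeet : (F '' U ∩ U).Nonempty)
    (hL : 0 < L) (hX : ∀ ρ ∈ rotRel F U, X ρ = L) (hY : IsGreatest (Y '' rotRel F U) 0)
    {σ : E 2} (hσ : σ ∈ rotSet F) : Y σ ≤ 0 := by
  have hYle : ∀ ρ ∈ rotRel F U, Y ρ ≤ 0 := fun ρ hρ => hY.2 (mem_image_of_mem Y hρ)
  by_cases hall : ∀ ρ ∈ rotSet F, X ρ = L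
  · exact hF.le_zero_of_forall_eq hcont hinj hXY hUb hU hmeet hL hall hYle hσ
  · push Not at hall
    obtain ⟨ρ', hρ', hne⟩ := hall
    obtain ⟨ρ, hρ, hρY⟩ := hY.1
    exact hF.le_zero_of_frequently_le_iterate hcont hinj hXY hUb hU hmeet hL hX hYle
      (fun ε hε => frequently_le_iterate hUb (fun ε hε => hF.eventually_width_le hcont hinj hXY
        hUb hU hX hρ' hne hε) hρ hρY hε) hσ

end MaximalDrift

section Cone

/-- `⟨·, v⟩` as a continuous linear functional. -/
def sdotL (v : E 2) : E 2 →L[ℝ] ℝ :=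
  v 0 • EuclideanSpace.proj 0 + v 1 • EuclideanSpace.proj 1

/-- `⟨·, v^⊥⟩` as a continuous linear functional. -/
def pdotL (v : E 2) : E 2 →L[ℝ] ℝ :=
  v 0 • EuclideanSpace.proj 1 - v 1 • EuclideanSpace.proj 0

lemma sdotL_apply (v z : E 2) : sdotL v z = sdot v z := by
  simp [sdotL, sdot, mul_comm]

lemma pdotL_apply (v z : E 2) : pdotL v z = pdot v z := by
  simp [pdotL, pdot, mul_comm]

lemma sdot_self_pos {v : E 2} (hv : v ≠ 0) : 0 < sdot v v := by
  have h : sdot v v = ‖v‖ ^ 2 := by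
    rw [EuclideanSpace.real_norm_sq_eq, Fin.sum_univ_two, sdot, sq, sq]
  rw [h]
  positivity

lemma bijective_sdotL_prod_pdotL {v : E 2} (hv : v ≠ 0) :
    Function.Bijective ((sdotL v).prod (pdotL v)) := by
  have hinj : Function.Injective ((sdotL v).prod (pdotL v)) := by
    refine (injective_iff_map_eq_zero _).2 fun z hz => ?_
    obtain ⟨hs, hp⟩ := Prod.ext_iff.1 hz
    replace hs : z 0 * v 0 + z 1 * v 1 = 0 := (sdotL_apply v z).symm.trans hs
    replace hp : z 1 * v 0 - z 0 * v 1 = 0 := (pdotL_apply v z).symm.trans hp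
    have hv' : v 0 * v 0 + v 1 * v 1 ≠ 0 := (sdot_self_pos hv).ne'
    refine PiLp.ext (Fin.forall_fin_two.2 ⟨?_, ?_⟩)
    · exact (mul_eq_zero_iff_right hv').1 (by linear_combination v 0 * hs - v 1 * hp)
    · exact (mul_eq_zero_iff_right hv').1 (by linear_combination v 1 * hs + v 0 * hp)
  exact ⟨hinj, (LinearMap.injective_iff_surjective_of_finrank_eq_finrank
    (f := ((sdotL v).prod (pdotL v) : E 2 →ₗ[ℝ] ℝ × ℝ)) (by simp)).1 hinj⟩

lemma sdot_neg (v z : E 2) : sdot (-v) z = -sdot v z := by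
  simp only [sdot, PiLp.neg_apply]
  ring

lemma pdot_neg (v z : E 2) : pdot (-v) z = -pdot v z := by
  simp only [pdot, PiLp.neg_apply]
  ring

lemma coneC_neg (v : E 2) (a b : ℝ) : coneC (-v) b a = coneC v a b := by
  ext z
  simp only [coneC, mem_ofPred_eq, sdot_neg, pdot_neg, mul_neg, neg_le_neg_iff, and_comm]

lemma lineL_neg (lam : ℝ) (v : E 2) : lineL (-lam) (-v) = lineL lam v := by
  ext z
  have hself : sdot (-v) (-v) = sdot v v := by simp [sdot]
  simp only [lineL, mem_ofPred_eq, hself, sdot_neg, neg_mul, neg_inj]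

lemma lineSeg_neg (lam : ℝ) (v : E 2) (a b : ℝ) : lineSeg (-lam) (-v) b a = lineSeg lam v a b :=
  congrArg₂ (· ∩ ·) (lineL_neg lam v) (coneC_neg v a b)

lemma convex_coneC (v : E 2) (a b : ℝ) : Convex ℝ (coneC v a b) := by
  have h : coneC v a b =
      {z | (a • sdotL v - pdotL v) z ≤ 0} ∩ {z | (pdotL v - b • sdotL v) z ≤ 0} := by
    ext z
    simp [coneC, sdotL_apply, pdotL_apply]
  rw [h]
  exact (convex_halfSpace_le (a • sdotL v - pdotL v).isLinear 0).inter
    (convex_halfSpace_le (pdotL v - b • sdotL v).isLinear 0)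

variable {G : E 2 → E 2} {U : Set (E 2)} {lam : ℝ} {v : E 2} {a b : ℝ}

lemma exists_mem_lineSeg_pdot_eq (hlam : 0 < lam) (hv : v ≠ 0)
    (hne : (lineSeg lam v a b).Nonempty) :
    (∃ z ∈ lineSeg lam v a b, pdot v z = a * sdot v z) ∧
      ∃ z ∈ lineSeg lam v a b, pdot v z = b * sdot v z := by
  have hL : 0 < lam * sdot v v := mul_pos hlam (sdot_self_pos hv)
  have hab : a ≤ b := by
    obtain ⟨z, hz, ha, hb⟩ := hne
    rw [show sdot v z = _ from hz] at ha hb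
    exact le_of_mul_le_mul_right (ha.trans hb) hL
  have hmem : ∀ c, a ≤ c → c ≤ b → ∃ z ∈ lineSeg lam v a b, pdot v z = c * sdot v z := by
    intro c hac hcb
    obtain ⟨z, hzs, hzp⟩ := exists_coordinates_eq (bijective_sdotL_prod_pdotL hv)
      (lam * sdot v v) (c * (lam * sdot v v))
    rw [sdotL_apply] at hzs
    rw [pdotL_apply, ← hzs] at hzp
    rw [← hzs] at hL
    refine ⟨z, ⟨hzs, ?_, ?_⟩, hzp⟩ <;> rw [hzp] <;> gcongr
  exact ⟨hmem a le_rfl hab, hmem b hab le_rfl⟩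

lemma LatticeEquivariant.rotSet_subset_coneC_of_pos (hG : LatticeEquivariant G)
    (hcont : Continuous G) (hinj : Function.Injective G) (hUb : Bornology.IsBounded U)
    (hU : IsPreconnected U) (hmeet : (G '' U ∩ U).Nonempty) (hlam : 0 < lam) (hv : v ≠ 0)
    (hrot : rotRel G U = lineSeg lam v a b) : rotSet G ⊆ coneC v a b := by
  intro σ hσ
  have hne : (lineSeg lam v a b).Nonempty :=
    hrot ▸ hG.rotRel_nonempty hcont (hmeet.mono inter_subset_right)
  obtain ⟨⟨za, hza, hpa⟩, zb, hzb, hpb⟩ := exists_mem_lineSeg_pdot_eq hlam hv hne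
  have hX : ∀ ρ ∈ rotRel G U, sdotL v ρ = lam * sdot v v := fun ρ hρ =>
    (sdotL_apply v ρ).trans (hrot ▸ hρ).1
  have hcoord := bijective_sdotL_prod_pdotL hv
  have hL := mul_pos hlam (sdot_self_pos hv)
  have hlower := hG.le_zero_of_isGreatest (Y := a • sdotL v + (-1 : ℝ) • pdotL v) hcont hinj
    (bijective_coordinates_shear hcoord a (by norm_num)) hUb hU hmeet hL hX
    (by
      rw [hrot]
      refine ⟨⟨za, hza, by simp [sdotL_apply, pdotL_apply, hpa]⟩, ?_⟩
      rintro _ ⟨z, hz, rfl⟩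
      simpa [sdotL_apply, pdotL_apply] using hz.2.1) hσ
  have hupper := hG.le_zero_of_isGreatest (Y := (-b) • sdotL v + (1 : ℝ) • pdotL v) hcont hinj
    (bijective_coordinates_shear hcoord (-b) one_ne_zero) hUb hU hmeet hL hX
    (by
      rw [hrot]
      refine ⟨⟨zb, hzb, by simp [sdotL_apply, pdotL_apply, hpb]⟩, ?_⟩
      rintro _ ⟨z, hz, rfl⟩
      simpa [sdotL_apply, pdotL_apply] using hz.2.2) hσ
  constructor
  · simpa [sdotL_apply, pdotL_apply] using hlower
  · simpa [sdotL_apply, pdotL_apply] using hupper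

end Cone

theorem extremal_points_in_cone_general {G : E 2 → E 2} (hG : LatticeEquivariant G)
    (hcont : Continuous G) (hinj : Function.Injective G) {U : Set (E 2)}
    (hUb : Bornology.IsBounded U) (hU : IsPreconnected U) (hmeet : (G '' U ∩ U).Nonempty)
    {lam : ℝ} (hlam : lam ≠ 0) {v : E 2} (hv : v ≠ 0) {a b : ℝ}
    (hrot : rotRel G U = lineSeg lam v a b) : convexHull ℝ (rotSet G) ⊆ coneC v a b := by
  refine convexHull_min ?_ (convex_coneC v a b)
  rcases hlam.lt_or_gt with hneg | hpos
  · rw [← coneC_neg]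
    rw [← lineSeg_neg] at hrot
    exact hG.rotSet_subset_coneC_of_pos hcont hinj hUb hU hmeet (neg_pos.2 hneg) (neg_ne_zero.2 hv)
      hrot
  · exact hG.rotSet_subset_coneC_of_pos hcont hinj hUb hU hmeet hpos hv hrot

/-- **Lemma (extremal points lie in the cone).**
If `Û ⊆ ℝ²` is bounded and connected with `G(Û) ∩ Û ≠ ∅` and
`ρ_Û(G) = L_{λ,v}[a,b]` with `λ ≠ 0`, then every extremal point of `ρ(G)` (extreme
point of its convex hull) belongs to `C_v[a,b]`. -/
theorem extremal_points_in_cone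
    (G : E 2 ≃ₜ E 2) (g : T 2 ≃ₜ T 2) (hlift : IsLift G g)
    (Uh : Set (E 2)) (hUb : Bornology.IsBounded Uh) (hUc : IsConnected Uh)
    (hmeet : ((⇑G) '' Uh ∩ Uh).Nonempty)
    (lam : ℝ) (hlam : lam ≠ 0) (v : E 2) (hv : v ≠ 0) (a b : ℝ) (hab : a ≤ b)
    (hrot : rotRel (⇑G) Uh = lineSeg lam v a b) :
    ∀ ρ ∈ Set.extremePoints ℝ (convexHull ℝ (rotSet (⇑G))), ρ ∈ coneC v a b :=
  fun _ hρ => extremal_points_in_cone_general hlift.2 G.continuous G.injective hUb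
    hUc.isPreconnected hmeet hlam hv hrot hρ.1
end
end
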